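/- Let C be a finite class of functions from {-1,1}^n to {-1,1}, let ε, δ > 0, let f: {-1,1}^n → {-1,1}, let N = ⌈n ln(2n|C|/δ)⌉, let m ≥ (8N/ε²) ln(2N|C|/δ), and let S = (x^i, f(x^i))_{i=1,…,m} be a random walk of length m on {-1,1}^n labeled by f. Let h_opt ∈ C minimize Δ(h,S) over h ∈ C. Then with probability at least 1 − δ, Δ(h_opt, f) ≤ opt_C(f) + ε. -/

import Mathlib

/-! The walk started from the uniform distribution is a stationary reversible Markov chain whose
transition operator `P` has spectral gap `γ = 2/n` below the eigenvalue `1` (the Poincaré inequality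
on the cube, `cube_poincare`). A Chernoff bound for such chains gives the result directly, with no
need to wait for the walk to mix; the eigenvalue `-1` of `P`, which reflects the alternation
of parities along the walk, does no harm.

For a set `A` of density `p`, with indicator `b`, put `z = (2ε/5)(b - p) - ε²/10` and
`d = exp (γ z)`. The exponential moment `E ∏ d(x^t)` equals `E (dP)^(m-1) d`. It is at most `1`,
because `E d ≤ 1` and `v ↦ d · P v` is a contraction for the squared norm `E v²/d`. By polarization, and by passing to
absolute values to control negative eigenvalues, this contraction property reduces to the quadratic
form bound `⟨w, P w⟩ ≤ E w²/d` (`quad_le`). The Poincaré inequality gives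
`⟨w, P w⟩ ≤ (1-γ) E w² + γ (E w)²`, and by Cauchy–Schwarz it then suffices that `E 1/(1-z) ≤ 1`,
an explicit computation from `E b = p`.

Markov's inequality yields `Pr[#{t | x^t ∈ A}/m ≥ p + ε/2] ≤ exp (-mε²/(5n))` (`tail_bound`), and
the lower bound on `m` makes this at most `δ/(2|C|)`. A union bound over `h ∈ C`, with both
`A = {h ≠ f}` and `A = {h = f}`, puts every empirical distance within `ε/2` of the true
one outside an event of probability at most `δ`. -/

noncomputable section

/-- `rwPoint x0 idx t` is the position of the random walk on `{-1,1}^n` after `t` steps,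
starting from `x0`, where the `(t+1)`-st step flips coordinate `idx t`. -/
def rwPoint {n : ℕ} (x0 : Fin n → Bool) (idx : ℕ → Fin n) : ℕ → Fin n → Bool
  | 0 => x0
  | t + 1 => Function.update (rwPoint x0 idx t) (idx t) (!(rwPoint x0 idx t (idx t)))

/-- The point `x^{t+1}` of the random walk `x^1, …, x^m` encoded by
`ω = (x^1, (i_1, …, i_m))` (only the step coordinates `i_2, …, i_m` are used). -/
def walkOf {n m : ℕ} (hm1 : 1 ≤ m) (ω : (Fin n → Bool) × (Fin m → Fin n)) (t : ℕ) :
    Fin n → Bool :=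
  rwPoint ω.1 (fun s => if h : s + 1 < m then ω.2 ⟨s + 1, h⟩ else ω.2 ⟨0, by omega⟩) t

/-- `Δ(h, S)`: the fraction of the `m` examples of the labeled random walk encoded by `ω`
on which `h` disagrees with the labeling function `f`. -/
def sampleDist {n m : ℕ} (hm1 : 1 ≤ m) (f h : (Fin n → Bool) → Bool)
    (ω : (Fin n → Bool) × (Fin m → Fin n)) : ℝ :=
  (1 / (m : ℝ)) *
    (((Finset.range m).filter
      (fun t => h (walkOf hm1 ω t) ≠ f (walkOf hm1 ω t))).card : ℝ)

/-- `Δ(h, f) = Pr_x[h(x) ≠ f(x)]` for uniform `x ∈ {-1,1}^n`. -/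
def cubeDist {n : ℕ} (h f : (Fin n → Bool) → Bool) : ℝ :=
  ((Finset.univ.filter (fun z : Fin n → Bool => h z ≠ f z)).card : ℝ) / 2 ^ n

/-- `x ⊙ e_i`: the point `x` with its `i`-th coordinate flipped. -/
def flipAt {n : ℕ} (i : Fin n) (x : Fin n → Bool) : Fin n → Bool :=
  Function.update x i (!(x i))

lemma flipAt_flipAt {n : ℕ} (i : Fin n) (x : Fin n → Bool) : flipAt i (flipAt i x) = x := by
  simp [flipAt]

lemma sum_flipAt {n : ℕ} (i : Fin n) (g : (Fin n → Bool) → ℝ) :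
    ∑ x, g (flipAt i x) = ∑ x, g x :=
  (Function.Involutive.bijective (flipAt_flipAt i)).sum_comp g

lemma sum_mul_flipAt {n : ℕ} (i : Fin n) (u v : (Fin n → Bool) → ℝ) :
    ∑ x, u x * v (flipAt i x) = ∑ x, v x * u (flipAt i x) := by
  rw [← sum_flipAt i]
  simp [flipAt_flipAt, mul_comm]

/-! ### The spectral gap of the cube -/

lemma sum_cube_succ {n : ℕ} (g : (Fin (n + 1) → Bool) → ℝ) :
    ∑ x, g x = ∑ y : Fin n → Bool, g (Fin.cons false y) + ∑ y : Fin n → Bool, g (Fin.cons true y) := by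
  rw [← (Fin.consEquiv (fun _ : Fin (n + 1) => Bool)).sum_comp, Fintype.sum_prod_type]
  simp [Fin.consEquiv, add_comm]

lemma flipAt_zero_cons {n : ℕ} (c : Bool) (y : Fin n → Bool) :
    flipAt 0 (Fin.cons c y : Fin (n + 1) → Bool) = Fin.cons (!c) y := by
  simp [flipAt]

lemma flipAt_succ_cons {n : ℕ} (i : Fin n) (c : Bool) (y : Fin n → Bool) :
    flipAt i.succ (Fin.cons c y : Fin (n + 1) → Bool) = Fin.cons c (flipAt i y) := by
  simp [flipAt, Fin.cons_update]

/-- The Poincaré (Efron–Stein) inequality on the cube, in terms of unnormalized sums. -/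
lemma cube_poincare (n : ℕ) (w : (Fin n → Bool) → ℝ) :
    2 ^ n * ∑ x, w x ^ 2 - (∑ x, w x) ^ 2 ≤
      2 ^ n / 4 * ∑ i, ∑ x, (w x - w (flipAt i x)) ^ 2 := by
  induction n with
  | zero => simp
  | succ n ih =>
    have h0 := ih (fun y => w (Fin.cons false y))
    have h1 := ih (fun y => w (Fin.cons true y))
    -- Cauchy–Schwarz for the difference of `w` across the first coordinate
    have hcs : (∑ y : Fin n → Bool, w (Fin.cons false y) - ∑ y : Fin n → Bool, w (Fin.cons true y)) ^ 2
        ≤ 2 ^ n * ∑ y : Fin n → Bool, (w (Fin.cons false y) - w (Fin.cons true y)) ^ 2 := by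
      have := sq_sum_le_card_mul_sum_sq (s := (Finset.univ : Finset (Fin n → Bool)))
        (f := fun y => w (Fin.cons false y) - w (Fin.cons true y))
      simpa [Finset.sum_sub_distrib] using this
    have hsym : ∑ y : Fin n → Bool, (w (Fin.cons true y) - w (Fin.cons false y)) ^ 2
        = ∑ y : Fin n → Bool, (w (Fin.cons false y) - w (Fin.cons true y)) ^ 2 :=
      Finset.sum_congr rfl fun y _ => by ring
    rw [sum_cube_succ, sum_cube_succ, Fin.sum_univ_succ, sum_cube_succ]
    simp only [sum_cube_succ (n := n), flipAt_zero_cons, flipAt_succ_cons, Bool.not_false,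
      Bool.not_true, Finset.sum_add_distrib, hsym]
    rw [pow_succ]
    nlinarith [h0, h1, hcs]

/-- The transition form `⟨w, P w⟩` bounded through the spectral gap `2/n` (all terms
multiplied by `n 2^n`). -/
lemma form_le {n : ℕ} (w : (Fin n → Bool) → ℝ) :
    ∑ i, ∑ x, w x * w (flipAt i x) ≤
      (n - 2) * ∑ x, w x ^ 2 + 2 * (∑ x, w x) ^ 2 / 2 ^ n := by
  have h := cube_poincare n w
  have he : ∑ i, ∑ x, (w x - w (flipAt i x)) ^ 2 =
      2 * n * ∑ x, w x ^ 2 - 2 * ∑ i, ∑ x, w x * w (flipAt i x) := by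
    have : ∀ i : Fin n, ∑ x, (w x - w (flipAt i x)) ^ 2 =
        2 * ∑ x, w x ^ 2 - 2 * ∑ x, w x * w (flipAt i x) := by
      intro i
      have h2 := sum_flipAt i (fun x => w x ^ 2)
      have : ∑ x, (w x - w (flipAt i x)) ^ 2 =
          ∑ x, w x ^ 2 + ∑ x, w (flipAt i x) ^ 2 - 2 * ∑ x, w x * w (flipAt i x) := by
        rw [Finset.mul_sum, ← Finset.sum_add_distrib, ← Finset.sum_sub_distrib]
        exact Finset.sum_congr rfl fun x _ => by ring
      rw [this, h2]; ring
    simp only [this, Finset.sum_sub_distrib, ← Finset.mul_sum]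
    simp
    ring
  rw [he] at h
  have hp : (0 : ℝ) < 2 ^ n := by positivity
  have hq : (2 : ℝ) ^ n * (2 * (∑ x, w x) ^ 2 / 2 ^ n) = 2 * (∑ x, w x) ^ 2 := by
    field_simp
  refine le_of_mul_le_mul_left ?_ hp
  rw [mul_add, hq]
  linarith

/-! ### Exponential moments of the walk -/

/-- The quadratic form bound `⟨w, P w⟩ ≤ E w²/d` for `d = exp (γ z)`, `γ = 2/n`. -/
lemma quad_le {n : ℕ} (hn : 1 ≤ n) (z : (Fin n → Bool) → ℝ) (hz : ∀ x, z x ≤ 1 / 2)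
    (hE : ∑ x, 1 / (1 - z x) ≤ 2 ^ n) (w : (Fin n → Bool) → ℝ) :
    ∑ i, ∑ x, w x * w (flipAt i x) ≤ n * ∑ x, w x ^ 2 / Real.exp (2 / n * z x) := by
  have hn0 : (0 : ℝ) < n := by exact_mod_cast hn
  have hp : (0 : ℝ) < 2 ^ n := by positivity
  have hcs : (∑ x, w x) ^ 2 ≤ (∑ x, w x ^ 2 * (1 - z x)) * ∑ x, 1 / (1 - z x) := by
    apply Finset.sum_sq_le_sum_mul_sum_of_sq_le_mul
    · intro x _
      have := hz x
      exact mul_nonneg (sq_nonneg _) (by linarith)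
    · intro x _
      have := hz x
      exact one_div_nonneg.2 (by linarith)
    · intro x _
      have : 1 - z x ≠ 0 := by have := hz x; intro h; linarith
      refine le_of_eq ?_
      field_simp
  have hnn : 0 ≤ ∑ x, w x ^ 2 * (1 - z x) :=
    Finset.sum_nonneg fun x _ => mul_nonneg (sq_nonneg _) (by have := hz x; linarith)
  have hcs2 : 2 * (∑ x, w x) ^ 2 / 2 ^ n ≤ 2 * ∑ x, w x ^ 2 * (1 - z x) := by
    rw [div_le_iff₀ hp]
    nlinarith [mul_le_mul_of_nonneg_left hE hnn]
  refine (form_le w).trans ?_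
  have hterm : (n - 2 : ℝ) * ∑ x, w x ^ 2 + 2 * ∑ x, w x ^ 2 * (1 - z x) ≤
      n * ∑ x, w x ^ 2 / Real.exp (2 / n * z x) := by
    rw [Finset.mul_sum, Finset.mul_sum, Finset.mul_sum, ← Finset.sum_add_distrib]
    refine Finset.sum_le_sum fun x _ => ?_
    rw [div_eq_mul_inv, ← Real.exp_neg]
    have h1 := Real.add_one_le_exp (-(2 / n * z x))
    have h2 : (n : ℝ) * (-(2 / n * z x) + 1) = n - 2 * z x := by field_simp; ring
    have h3 : (n : ℝ) - 2 * z x ≤ n * Real.exp (-(2 / n * z x)) := by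
      rw [← h2]; exact mul_le_mul_of_nonneg_left h1 hn0.le
    nlinarith [mul_le_mul_of_nonneg_left h3 (sq_nonneg (w x))]
  linarith

/-- `genFun d k x`: the sum over all step sequences of length `k` of the product of `d` along
the walk started at `x`. It is `n ^ k` times `(dP)^k d` at `x`. -/
def genFun {n : ℕ} (d : (Fin n → Bool) → ℝ) : ℕ → (Fin n → Bool) → ℝ
  | 0 => d
  | k + 1 => fun x => d x * ∑ i, genFun d k (flipAt i x)

lemma rwPoint_succ' {n : ℕ} (x : Fin n → Bool) (idx : ℕ → Fin n) (t : ℕ) :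
    rwPoint x idx (t + 1) = rwPoint (flipAt (idx 0) x) (fun s => idx (s + 1)) t := by
  induction t with
  | zero => rfl
  | succ t ih =>
    rw [rwPoint, ih]
    rfl

/-- Expansion of `genFun` over step sequences; `E r` is any extension of the finite
sequence `r` to `ℕ`, its values beyond `k` being irrelevant. -/
lemma sum_prod_walk {n : ℕ} (d : (Fin n → Bool) → ℝ) (k : ℕ) (x : Fin n → Bool)
    (E : (Fin k → Fin n) → ℕ → Fin n) (hE : ∀ r s (h : s < k), E r s = r ⟨s, h⟩) :
    ∑ r, ∏ t ∈ Finset.range (k + 1), d (rwPoint x (E r) t) = genFun d k x := by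
  induction k generalizing x with
  | zero => simp [genFun, rwPoint]
  | succ k ih =>
    rw [← (Fin.consEquiv (fun _ : Fin (k + 1) => Fin n)).sum_comp, Fintype.sum_prod_type]
    change _ = d x * ∑ i, genFun d k (flipAt i x)
    rw [Finset.mul_sum]
    refine Finset.sum_congr rfl fun i _ => ?_
    rw [← ih (flipAt i x) (fun r s => E (Fin.cons i r) (s + 1)) ?_, Finset.mul_sum]
    · refine Finset.sum_congr rfl fun r _ => ?_
      rw [Finset.prod_range_succ', mul_comm]
      have h0 : E (Fin.cons i r) 0 = i := by rw [hE _ 0 (by omega)]; rfl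
      simp only [Fin.consEquiv, Equiv.coe_fn_mk, rwPoint_succ', h0]
      rfl
    · intro r s h
      rw [hE _ (s + 1) (by omega)]
      rfl

/-- The exponential moment bound, from the contraction property of `v ↦ d · P v` in
the squared norm `E v²/d`. -/
lemma genFun_sum_le {n : ℕ} (hn : 1 ≤ n) (d : (Fin n → Bool) → ℝ) (hd : ∀ x, 0 < d x)
    (hsum : ∑ x, d x ≤ 2 ^ n)
    (hquad : ∀ w : (Fin n → Bool) → ℝ,
      ∑ i, ∑ x, w x * w (flipAt i x) ≤ n * ∑ x, w x ^ 2 / d x) (k : ℕ) :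
    ∑ x, genFun d k x ≤ 2 ^ n * n ^ k := by
  have hn0 : (0 : ℝ) < n := by exact_mod_cast hn
  have hneg : ∀ w : (Fin n → Bool) → ℝ,
      -∑ i, ∑ x, w x * w (flipAt i x) ≤ n * ∑ x, w x ^ 2 / d x := by
    intro w
    have h := hquad (fun x => |w x|)
    simp only [sq_abs] at h
    refine le_trans ?_ h
    simp only [← Finset.sum_neg_distrib]
    refine Finset.sum_le_sum fun i _ => Finset.sum_le_sum fun x _ => ?_
    rw [← abs_mul]
    exact neg_le_abs _
  have hpol : ∀ u v : (Fin n → Bool) → ℝ, 2 * ∑ i, ∑ x, u x * v (flipAt i x) ≤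
      n * (∑ x, u x ^ 2 / d x + ∑ x, v x ^ 2 / d x) := by
    intro u v
    have h1 := hquad (fun x => u x + v x)
    have h2 := hneg (fun x => u x - v x)
    have e1 : ∑ i, ∑ x, (u x + v x) * (u (flipAt i x) + v (flipAt i x)) -
        ∑ i, ∑ x, (u x - v x) * (u (flipAt i x) - v (flipAt i x)) =
        4 * ∑ i, ∑ x, u x * v (flipAt i x) := by
      rw [← Finset.sum_sub_distrib, Finset.mul_sum]
      refine Finset.sum_congr rfl fun i _ => ?_
      have hs := sum_mul_flipAt i u v
      have : ∑ x, (u x + v x) * (u (flipAt i x) + v (flipAt i x)) -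
          ∑ x, (u x - v x) * (u (flipAt i x) - v (flipAt i x)) =
          2 * ∑ x, u x * v (flipAt i x) + 2 * ∑ x, v x * u (flipAt i x) := by
        rw [← Finset.sum_sub_distrib, Finset.mul_sum, Finset.mul_sum, ← Finset.sum_add_distrib]
        exact Finset.sum_congr rfl fun x _ => by ring
      rw [this, ← hs]; ring
    have e2 : ∑ x, (u x + v x) ^ 2 / d x + ∑ x, (u x - v x) ^ 2 / d x =
        2 * (∑ x, u x ^ 2 / d x + ∑ x, v x ^ 2 / d x) := by
      rw [← Finset.sum_add_distrib, ← Finset.sum_add_distrib, Finset.mul_sum]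
      exact Finset.sum_congr rfl fun x _ => by ring
    have e3 : (n : ℝ) * ∑ x, (u x + v x) ^ 2 / d x + n * ∑ x, (u x - v x) ^ 2 / d x =
        2 * (n * (∑ x, u x ^ 2 / d x + ∑ x, v x ^ 2 / d x)) := by
      rw [← mul_add, e2]; ring
    linarith
  have hQ : ∀ k, ∑ x, genFun d k x ^ 2 / d x ≤ 2 ^ n * ((n : ℝ) ^ k) ^ 2 := by
    intro k
    induction k with
    | zero =>
      refine le_trans (le_of_eq ?_) (by simpa using hsum)
      refine Finset.sum_congr rfl fun x _ => ?_
      have := (hd x).ne'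
      simp only [genFun]
      field_simp
    | succ k ih =>
      -- the polarized bound with `u = d · P v` gives `2‖u‖² ≤ ‖u‖² + ‖v‖²`
      have h := hpol (fun x => genFun d (k + 1) x / n) (genFun d k)
      have e1 : ∑ i, ∑ x, genFun d (k + 1) x / n * genFun d k (flipAt i x) =
          (∑ x, genFun d (k + 1) x ^ 2 / d x) / n := by
        rw [Finset.sum_comm, Finset.sum_div]
        refine Finset.sum_congr rfl fun x _ => ?_
        rw [← Finset.mul_sum]
        have := (hd x).ne'
        have e : genFun d (k + 1) x = d x * ∑ i, genFun d k (flipAt i x) := rfl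
        rw [e]
        field_simp
      have e2 : ∑ x, (genFun d (k + 1) x / n) ^ 2 / d x =
          (∑ x, genFun d (k + 1) x ^ 2 / d x) / n ^ 2 := by
        rw [Finset.sum_div]
        exact Finset.sum_congr rfl fun x _ => by ring
      rw [e1, e2] at h
      set X := ∑ x, genFun d (k + 1) x ^ 2 / d x
      have h3 : X / n ≤ n * ∑ x, genFun d k x ^ 2 / d x := by
        have : (n : ℝ) * (X / n ^ 2) = X / n := by field_simp
        rw [mul_add, this] at h
        linarith
      rw [div_le_iff₀ hn0] at h3
      calc X ≤ n * (∑ x, genFun d k x ^ 2 / d x) * n := h3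
        _ ≤ n * (2 ^ n * ((n : ℝ) ^ k) ^ 2) * n := by gcongr
        _ = 2 ^ n * ((n : ℝ) ^ (k + 1)) ^ 2 := by ring
  have hN : (0 : ℝ) < (n : ℝ) ^ k := by positivity
  have hpt : ∀ x, genFun d k x ≤ (genFun d k x ^ 2 / d x / n ^ k + n ^ k * d x) / 2 := by
    intro x
    have hdx := hd x
    have e : (genFun d k x ^ 2 / d x / n ^ k + n ^ k * d x) / 2 - genFun d k x =
        (genFun d k x - n ^ k * d x) ^ 2 / (2 * d x * n ^ k) := by
      field_simp
      ring
    have : 0 ≤ (genFun d k x - n ^ k * d x) ^ 2 / (2 * d x * n ^ k) := by positivity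
    linarith
  have h1 : ∑ x, genFun d k x ≤
      ((∑ x, genFun d k x ^ 2 / d x) / n ^ k + n ^ k * ∑ x, d x) / 2 := by
    refine (Finset.sum_le_sum fun x _ => hpt x).trans (le_of_eq ?_)
    rw [← Finset.sum_div, Finset.sum_add_distrib, ← Finset.sum_div, ← Finset.mul_sum]
  have h2 : (∑ x, genFun d k x ^ 2 / d x) / n ^ k ≤ 2 ^ n * n ^ k := by
    rw [div_le_iff₀ hN]
    refine (hQ k).trans (le_of_eq (by ring))
  have h3 := mul_le_mul_of_nonneg_left hsum hN.le
  linarith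

lemma sum_prod_walkOf {n m : ℕ} (hm1 : 1 ≤ m) (d : (Fin n → Bool) → ℝ) :
    ∑ ω : (Fin n → Bool) × (Fin m → Fin n), ∏ t ∈ Finset.range m, d (walkOf hm1 ω t) =
      n * ∑ x, genFun d (m - 1) x := by
  obtain ⟨k, rfl⟩ : ∃ k, m = k + 1 := ⟨m - 1, by omega⟩
  rw [Fintype.sum_prod_type, Finset.mul_sum]
  refine Finset.sum_congr rfl fun x _ => ?_
  rw [← (Fin.consEquiv (fun _ : Fin (k + 1) => Fin n)).sum_comp, Fintype.sum_prod_type]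
  rw [Finset.sum_congr rfl (g := fun _ => genFun d k x)]
  · simp
  · intro i _
    refine sum_prod_walk d k x (fun r s => if h : s + 1 < k + 1 then
      (Fin.cons i r : Fin (k + 1) → Fin n) ⟨s + 1, h⟩ else
      (Fin.cons i r : Fin (k + 1) → Fin n) ⟨0, by omega⟩) ?_
    intro r s h
    simp only [Nat.add_lt_add_iff_right, h, dite_true]
    rfl

/-! ### The tail bound and the union bound -/

lemma tail_bound {n m : ℕ} (hn : 1 ≤ n) (hm1 : 1 ≤ m) (A : (Fin n → Bool) → Prop)
    [DecidablePred A] (ε p : ℝ) (hε : 0 < ε) (hε1 : ε ≤ 1)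
    (hp : p = ((Finset.univ.filter A).card : ℝ) / 2 ^ n) :
    ((Finset.univ.filter (fun ω : (Fin n → Bool) × (Fin m → Fin n) =>
      m * (p + ε / 2) ≤
        (((Finset.range m).filter (fun t => A (walkOf hm1 ω t))).card : ℝ))).card : ℝ) ≤
      2 ^ n * n ^ m * Real.exp (-(m * ε ^ 2 / (5 * n))) := by
  have hn1 : (1 : ℝ) ≤ n := by exact_mod_cast hn
  have hn0 : (0 : ℝ) < n := by linarith
  have hpow : (0 : ℝ) < 2 ^ n := by positivity
  set b : (Fin n → Bool) → ℝ := fun x => if A x then 1 else 0 with hb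
  have hbsum : ∑ x, b x = 2 ^ n * p := by
    rw [hp, mul_div_cancel₀ _ hpow.ne']
    simp [hb]
  have hcube : ∑ _x : Fin n → Bool, (1 : ℝ) = 2 ^ n := by simp
  have hb01 : ∀ x, 0 ≤ b x ∧ b x ≤ 1 ∧ b x ^ 2 = b x := by
    intro x
    by_cases h : A x <;> simp [hb, h]
  have hp0 : 0 ≤ p := by rw [hp]; positivity
  have hp1 : p ≤ 1 := by
    have : ∑ x, b x ≤ ∑ _x : Fin n → Bool, (1 : ℝ) :=
      Finset.sum_le_sum fun x _ => (hb01 x).2.1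
    rw [hbsum, hcube] at this
    nlinarith
  have hε2 : ε ^ 2 ≤ ε := by nlinarith
  set z : (Fin n → Bool) → ℝ := fun x => 2 * ε / 5 * (b x - p) - ε ^ 2 / 10 with hzdef
  have hz : ∀ x, z x ≤ 1 / 2 := by
    intro x
    obtain ⟨h0, h1, -⟩ := hb01 x
    simp only [hzdef]
    nlinarith
  have hz' : ∀ x, -(1 / 2) ≤ z x := by
    intro x
    obtain ⟨h0, h1, -⟩ := hb01 x
    simp only [hzdef]
    nlinarith
  have hzsum : ∑ x, z x = -(2 ^ n * (ε ^ 2 / 10)) := by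
    have : ∀ x, z x = 2 * ε / 5 * b x + (-(2 * ε / 5 * p) - ε ^ 2 / 10) * 1 := fun x => by
      simp only [hzdef]; ring
    simp only [this, Finset.sum_add_distrib, ← Finset.mul_sum, hbsum, hcube]
    ring
  -- uses `p (1 - p) ≤ 1/4` and `ε ≤ 1`
  have hzsq : ∑ x, z x ^ 2 ≤ 2 ^ n * (ε ^ 2 / 20) := by
    have : ∀ x, z x ^ 2 = ((2 * ε / 5) ^ 2 * (1 - 2 * p) - 2 * (2 * ε / 5) * (ε ^ 2 / 10)) * b x +
        (2 * ε / 5 * p + ε ^ 2 / 10) ^ 2 * 1 := fun x => by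
      have h := (hb01 x).2.2
      simp only [hzdef]
      linear_combination (2 * ε / 5) ^ 2 * h
    simp only [this, Finset.sum_add_distrib, ← Finset.mul_sum, hbsum, hcube]
    have h4 : ε ^ 2 * ε ^ 2 ≤ ε ^ 2 * 1 := by
      apply mul_le_mul_of_nonneg_left _ (sq_nonneg _)
      linarith
    have h5 : 0 ≤ ε ^ 2 * (p - 1 / 2) ^ 2 := by positivity
    have h6 : (2 * ε / 5) ^ 2 * (p - p ^ 2) + ε ^ 2 * ε ^ 2 / 100 ≤ ε ^ 2 / 20 := by nlinarith
    have h7 := mul_le_mul_of_nonneg_left h6 hpow.le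
    linarith
  have hinv : ∑ x, 1 / (1 - z x) ≤ 2 ^ n := by
    have hpt : ∀ x, 1 / (1 - z x) ≤ 1 + z x + 2 * z x ^ 2 := by
      intro x
      have h := hz x
      rw [div_le_iff₀ (by linarith)]
      nlinarith [mul_nonneg (sq_nonneg (z x)) (by linarith : 0 ≤ 1 - 2 * z x)]
    refine (Finset.sum_le_sum fun x _ => hpt x).trans ?_
    rw [Finset.sum_add_distrib, Finset.sum_add_distrib, ← Finset.mul_sum, hcube, hzsum]
    linarith
  set d : (Fin n → Bool) → ℝ := fun x => Real.exp (2 / n * z x) with hddef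
  have hγ0 : (0 : ℝ) < 2 / n := by positivity
  have hγ2 : (2 : ℝ) / n ≤ 2 := by
    rw [div_le_iff₀ hn0]; linarith
  have hdsum : ∑ x, d x ≤ 2 ^ n := by
    have hpt : ∀ x, d x ≤ 1 + 2 / n * z x + (2 / n * (2 / n)) * z x ^ 2 := by
      intro x
      have habs : |2 / n * z x| ≤ 1 := by
        rw [abs_mul, abs_of_pos hγ0]
        have : |z x| ≤ 1 / 2 := abs_le.2 ⟨hz' x, hz x⟩
        nlinarith [abs_nonneg (z x)]
      have h := (abs_le.1 (Real.abs_exp_sub_one_sub_id_le habs)).2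
      simp only [hddef]
      nlinarith
    refine (Finset.sum_le_sum fun x _ => hpt x).trans ?_
    rw [Finset.sum_add_distrib, Finset.sum_add_distrib, ← Finset.mul_sum, ← Finset.mul_sum,
      hcube, hzsum]
    have h1 : 2 / (n : ℝ) * (2 / n) * ∑ x, z x ^ 2 ≤
        2 / (n : ℝ) * 2 * (2 ^ n * (ε ^ 2 / 20)) := by
      gcongr
    linarith
  have hmgf : ∑ ω : (Fin n → Bool) × (Fin m → Fin n),
      ∏ t ∈ Finset.range m, d (walkOf hm1 ω t) ≤ 2 ^ n * n ^ m := by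
    rw [sum_prod_walkOf]
    have h := genFun_sum_le hn d (fun x => Real.exp_pos _) hdsum
      (fun w => quad_le hn z hz hinv w) (m - 1)
    calc (n : ℝ) * ∑ x, genFun d (m - 1) x ≤ n * (2 ^ n * n ^ (m - 1)) := by gcongr
      _ = 2 ^ n * n ^ m := by
        obtain ⟨k, rfl⟩ : ∃ k, m = k + 1 := ⟨m - 1, by omega⟩
        simp only [Nat.add_sub_cancel]
        ring
  have hprod : ∀ ω : (Fin n → Bool) × (Fin m → Fin n),
      ∏ t ∈ Finset.range m, d (walkOf hm1 ω t) =
      Real.exp (2 / n * (2 * ε / 5 *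
        ((((Finset.range m).filter (fun t => A (walkOf hm1 ω t))).card : ℝ) - m * p)
          - m * (ε ^ 2 / 10))) := by
    intro ω
    simp only [hddef]
    rw [← Real.exp_sum, ← Finset.mul_sum]
    congr 2
    simp only [hzdef, Finset.sum_sub_distrib, ← Finset.mul_sum, Finset.sum_const,
      Finset.card_range, nsmul_eq_mul]
    simp [hb]
  -- Markov's inequality for the exponential moment
  set B := Finset.univ.filter (fun ω : (Fin n → Bool) × (Fin m → Fin n) =>
      m * (p + ε / 2) ≤
        (((Finset.range m).filter (fun t => A (walkOf hm1 ω t))).card : ℝ)) with hB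
  have hlow : ∀ ω ∈ B, Real.exp (m * ε ^ 2 / (5 * n)) ≤
      ∏ t ∈ Finset.range m, d (walkOf hm1 ω t) := by
    intro ω hω
    rw [hprod, Real.exp_le_exp]
    have h := (Finset.mem_filter.1 hω).2
    have h1 : m * (ε ^ 2 / 10) ≤ 2 * ε / 5 *
        ((((Finset.range m).filter (fun t => A (walkOf hm1 ω t))).card : ℝ) - m * p)
          - m * (ε ^ 2 / 10) := by nlinarith
    calc m * ε ^ 2 / (5 * n) = 2 / n * (m * (ε ^ 2 / 10)) := by field_simp; ring
      _ ≤ _ := mul_le_mul_of_nonneg_left h1 hγ0.le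
  have hB2 : (B.card : ℝ) * Real.exp (m * ε ^ 2 / (5 * n)) ≤ 2 ^ n * n ^ m := by
    calc (B.card : ℝ) * Real.exp (m * ε ^ 2 / (5 * n))
        = ∑ _ω ∈ B, Real.exp (m * ε ^ 2 / (5 * n)) := by simp
      _ ≤ ∑ ω ∈ B, ∏ t ∈ Finset.range m, d (walkOf hm1 ω t) := Finset.sum_le_sum hlow
      _ ≤ ∑ ω, ∏ t ∈ Finset.range m, d (walkOf hm1 ω t) :=
        Finset.sum_le_sum_of_subset_of_nonneg (Finset.subset_univ _) fun ω _ _ =>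
          Finset.prod_nonneg fun t _ => (Real.exp_pos _).le
      _ ≤ _ := hmgf
  rw [Real.exp_neg, ← div_eq_mul_inv, le_div_iff₀ (Real.exp_pos _)]
  exact hB2

/-- Arithmetic of the sample size; `8/5 * log 2 > 1` absorbs the factor `log (2nc/δ) ≥ log 2`. -/
lemma sample_size {n m c : ℕ} (hn : 1 ≤ n) (hc : 1 ≤ c) (ε δ : ℝ) (hε : 0 < ε) (hδ : 0 < δ)
    (hδ1 : δ < 1) (N : ℝ) (hN : N = (⌈(n : ℝ) * Real.log (2 * (n : ℝ) * c / δ)⌉ : ℤ))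
    (hm : (m : ℝ) ≥ 8 * N / ε ^ 2 * Real.log (2 * N * c / δ)) :
    Real.exp (-(m * ε ^ 2 / (5 * n))) ≤ δ / (2 * c) := by
  have hn1 : (1 : ℝ) ≤ n := by exact_mod_cast hn
  have hn0 : (0 : ℝ) < n := by linarith
  have hc1 : (1 : ℝ) ≤ c := by exact_mod_cast hc
  have hl2 := Real.log_two_gt_d9
  have hL : Real.log 2 ≤ Real.log (2 * (n : ℝ) * c / δ) := by
    apply Real.log_le_log (by norm_num)
    rw [le_div_iff₀ hδ]
    nlinarith [mul_le_mul hn1 hc1 (by norm_num) hn0.le]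
  have hNL : (n : ℝ) * Real.log 2 ≤ N := by
    rw [hN]
    exact (mul_le_mul_of_nonneg_left hL hn0.le).trans (Int.le_ceil _)
  have hNpos : 0 < N := lt_of_lt_of_le (by nlinarith) hNL
  have hN1 : 1 ≤ N := by
    rw [hN] at hNpos ⊢
    exact_mod_cast hNpos
  have hL' : Real.log (2 * c / δ) ≤ Real.log (2 * N * c / δ) := by
    apply Real.log_le_log (by positivity)
    gcongr
    nlinarith
  have hL0 : 0 ≤ Real.log (2 * c / δ) := by
    apply Real.log_nonneg
    rw [le_div_iff₀ hδ]
    linarith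
  have h1 : 8 * N * Real.log (2 * N * c / δ) ≤ m * ε ^ 2 := by
    have h := mul_le_mul_of_nonneg_right hm (sq_nonneg ε)
    refine le_trans (le_of_eq ?_) h
    field_simp
  have h2 : Real.log (2 * c / δ) ≤ m * ε ^ 2 / (5 * n) := by
    rw [le_div_iff₀ (by positivity)]
    refine le_trans ?_ h1
    have h3 : 8 * N * Real.log (2 * c / δ) ≤ 8 * N * Real.log (2 * N * c / δ) := by gcongr
    have h4 : 5 * (n : ℝ) ≤ 8 * N := by nlinarith
    nlinarith [mul_le_mul_of_nonneg_right h4 hL0]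
  have h5 : δ / (2 * c) = Real.exp (-Real.log (2 * c / δ)) := by
    rw [Real.exp_neg, Real.exp_log (by positivity), inv_div]
  rw [h5, Real.exp_le_exp]
  linarith

/-- disagreement minimization achieves agnostic learning: for a finite
nonempty class `C`, an arbitrary labeling function `f`, `N = ⌈n ln(2n|C|/δ)⌉` and
`m ≥ (8N/ε²) ln(2N|C|/δ)`, with probability at least `1 − δ` over the labeled random walk
of length `m`, every `h_opt ∈ C` minimizing the empirical distance `Δ(·,S)` over `C`
satisfies `Δ(h_opt, f) ≤ opt_C(f) + ε`, where `opt_C(f) = min_{g ∈ C} Δ(g, f)`. -/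
theorem stmt10 {n m : ℕ} (hn : 1 ≤ n) (hm1 : 1 ≤ m)
    (C : Finset ((Fin n → Bool) → Bool)) (hC : C.Nonempty)
    (f : (Fin n → Bool) → Bool)
    (ε δ : ℝ) (hε : 0 < ε) (hδ : 0 < δ)
    (N : ℝ) (hN : N = (⌈(n : ℝ) * Real.log (2 * (n : ℝ) * C.card / δ)⌉ : ℤ))
    (hm : (m : ℝ) ≥ 8 * N / ε ^ 2 * Real.log (2 * N * C.card / δ)) :
    (1 : ℝ) - δ ≤
      ({ω : (Fin n → Bool) × (Fin m → Fin n) |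
          ∀ hopt ∈ C, (∀ h ∈ C, sampleDist hm1 f hopt ω ≤ sampleDist hm1 f h ω) →
            cubeDist hopt f ≤ C.inf' hC (fun g => cubeDist g f) + ε}.ncard : ℝ) /
        (Fintype.card ((Fin n → Bool) × (Fin m → Fin n)) : ℝ) := by
   classical
  have hn1 : (1 : ℝ) ≤ n := by exact_mod_cast hn
  have hn0 : (0 : ℝ) < n := by linarith
  have hm0 : (0 : ℝ) < m := by exact_mod_cast hm1
  have hcard : (Fintype.card ((Fin n → Bool) × (Fin m → Fin n)) : ℝ) = 2 ^ n * n ^ m := by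
    simp
  have hpow : (0 : ℝ) < 2 ^ n := by positivity
  have hT : (0 : ℝ) < 2 ^ n * n ^ m := by positivity
  rw [hcard]
  rcases le_or_gt 1 δ with hδ1 | hδ1
  · exact le_trans (by linarith) (by positivity : (0 : ℝ) ≤ _)
  have hcomp : ∀ h : (Fin n → Bool) → Bool,
      ((Finset.univ.filter (fun z : Fin n → Bool => h z = f z)).card : ℝ) / 2 ^ n =
        1 - cubeDist h f := by
    intro h
    have e := Finset.card_filter_add_card_filter_not (s := (Finset.univ : Finset (Fin n → Bool)))
      (fun z => h z = f z)
    have e2 : ((Finset.univ.filter (fun z : Fin n → Bool => h z = f z)).card : ℝ) +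
        ((Finset.univ.filter (fun z : Fin n → Bool => h z ≠ f z)).card : ℝ) = 2 ^ n := by
      rw [← Nat.cast_add, e]; simp
    rw [cubeDist, ← e2, eq_sub_iff_add_eq, ← add_div]
    rw [e2, div_self hpow.ne']
  have hcube0 : ∀ h : (Fin n → Bool) → Bool, 0 ≤ cubeDist h f := fun h => by
    unfold cubeDist; positivity
  have hcube1 : ∀ h : (Fin n → Bool) → Bool, cubeDist h f ≤ 1 := fun h => by
    have h1 := hcomp h
    have h2 : 0 ≤ ((Finset.univ.filter (fun z : Fin n → Bool => h z = f z)).card : ℝ) / 2 ^ n := by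
      positivity
    linarith
  obtain ⟨g, hgC, hg⟩ := Finset.exists_mem_eq_inf' hC (fun g => cubeDist g f)
  rw [hg]
  set G := {ω : (Fin n → Bool) × (Fin m → Fin n) |
          ∀ hopt ∈ C, (∀ h ∈ C, sampleDist hm1 f hopt ω ≤ sampleDist hm1 f h ω) →
            cubeDist hopt f ≤ cubeDist g f + ε} with hG
  have hGcard : G.ncard = (Finset.univ.filter (fun ω => ω ∈ G)).card := by
    rw [← Set.ncard_coe_finset]; simp
  rw [hGcard, le_div_iff₀ hT]
  have hsplit : ((Finset.univ.filter (fun ω => ω ∈ G)).card : ℝ) +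
      ((Finset.univ.filter (fun ω => ω ∉ G)).card : ℝ) = 2 ^ n * n ^ m := by
    rw [← Nat.cast_add, Finset.card_filter_add_card_filter_not, ← hcard]
    rfl
  suffices hbad : ((Finset.univ.filter (fun ω => ω ∉ G)).card : ℝ) ≤ δ * (2 ^ n * n ^ m) by
    linarith
  rcases lt_or_ge 1 ε with hε1 | hε1
  · -- distances lie in `[0,1]`, so the claim is vacuous when `ε > 1`
    have : Finset.univ.filter (fun ω => ω ∉ G) = ∅ := by
      refine Finset.filter_eq_empty_iff.2 fun ω _ => not_not.2 ?_
      intro hopt _ _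
      linarith [hcube0 g, hcube1 hopt]
    rw [this]
    simp only [Finset.card_empty, Nat.cast_zero]
    positivity
  have hc : 1 ≤ C.card := hC.card_pos
  have hc0 : (0 : ℝ) < C.card := by exact_mod_cast hc
  have hexp := sample_size hn hc ε δ hε hδ hδ1 N hN hm
  set U : ((Fin n → Bool) → Bool) → Finset ((Fin n → Bool) × (Fin m → Fin n)) := fun h =>
    Finset.univ.filter (fun ω => m * (cubeDist h f + ε / 2) ≤
      (((Finset.range m).filter (fun t => h (walkOf hm1 ω t) ≠ f (walkOf hm1 ω t))).card : ℝ))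
    with hU
  set V : ((Fin n → Bool) → Bool) → Finset ((Fin n → Bool) × (Fin m → Fin n)) := fun h =>
    Finset.univ.filter (fun ω => m * ((1 - cubeDist h f) + ε / 2) ≤
      (((Finset.range m).filter (fun t => h (walkOf hm1 ω t) = f (walkOf hm1 ω t))).card : ℝ))
    with hV
  have hUc : ∀ h, ((U h).card : ℝ) ≤ 2 ^ n * n ^ m * (δ / (2 * C.card)) := fun h =>
    (tail_bound hn hm1 (fun x => h x ≠ f x) ε _ hε hε1 rfl).trans
      (mul_le_mul_of_nonneg_left hexp hT.le)
  have hVc : ∀ h, ((V h).card : ℝ) ≤ 2 ^ n * n ^ m * (δ / (2 * C.card)) := fun h =>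
    (tail_bound hn hm1 (fun x => h x = f x) ε _ hε hε1 (hcomp h).symm).trans
      (mul_le_mul_of_nonneg_left hexp hT.le)
  have hsub : Finset.univ.filter (fun ω => ω ∉ G) ⊆ C.biUnion (fun h => U h ∪ V h) := by
    intro ω hω
    by_contra hno
    refine (Finset.mem_filter.1 hω).2 ?_
    intro hopt hoptC hmin
    have hnot : ∀ h ∈ C, ω ∉ U h ∧ ω ∉ V h := by
      intro h hh
      constructor <;> intro hmem <;> apply hno <;> rw [Finset.mem_biUnion] <;>
        exact ⟨h, hh, by simp [hmem]⟩
    have h1 := (hnot g hgC).1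
    have h2 := (hnot hopt hoptC).2
    simp only [hU, hV, Finset.mem_filter, Finset.mem_univ, true_and, not_le] at h1 h2
    have e := Finset.card_filter_add_card_filter_not (s := Finset.range m)
      (fun t => hopt (walkOf hm1 ω t) = f (walkOf hm1 ω t))
    have e2 : (((Finset.range m).filter
        (fun t => hopt (walkOf hm1 ω t) = f (walkOf hm1 ω t))).card : ℝ) +
        (((Finset.range m).filter
        (fun t => hopt (walkOf hm1 ω t) ≠ f (walkOf hm1 ω t))).card : ℝ) = m := by
      rw [← Nat.cast_add, e]; simp
    have h3 := hmin g hgC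
    unfold sampleDist at h3
    have h4 := le_of_mul_le_mul_left h3 (by positivity)
    have h5 : (m : ℝ) * cubeDist hopt f ≤ m * (cubeDist g f + ε) := by linarith
    exact le_of_mul_le_mul_left h5 hm0
  calc ((Finset.univ.filter (fun ω => ω ∉ G)).card : ℝ)
      ≤ ((C.biUnion (fun h => U h ∪ V h)).card : ℝ) := by
        exact_mod_cast Finset.card_le_card hsub
    _ ≤ ∑ h ∈ C, ((U h ∪ V h).card : ℝ) := by exact_mod_cast Finset.card_biUnion_le
    _ ≤ ∑ _h ∈ C, 2 ^ n * (n : ℝ) ^ m * (δ / C.card) := by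
        refine Finset.sum_le_sum fun h _ => ?_
        have h1 : ((U h ∪ V h).card : ℝ) ≤ (U h).card + (V h).card := by
          exact_mod_cast Finset.card_union_le _ _
        have h2 : δ / (C.card : ℝ) = δ / (2 * C.card) + δ / (2 * C.card) := by
          field_simp; ring
        rw [h2, mul_add]
        linarith [hUc h, hVc h]
    _ = δ * (2 ^ n * n ^ m) := by
        rw [Finset.sum_const, nsmul_eq_mul]
        field_simp
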